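/- Let S = ℤ^d, let γ[·] be a translation-covariant random specification on Ω = E^{ℤ^d} such that 𝒢(γ[ξ]) ≠ ∅ for ℙ-almost every ξ, and let ξ ↦ μ[ξ] be a translation-covariant random infinite-volume Gibbs measure, i.e. an ℋ–e(𝒫(Ω))-measurable map with μ[ξ] ∈ 𝒢(γ[ξ]) for ℙ-almost every ξ. Then there exists a map w : H → 𝒫(𝒫(Ω)) satisfying the conclusions of the extremal decomposition theorem — namely: ξ ↦ w[ξ] is ℋ–e(𝒫(𝒫(Ω)))-measurable; for ℙ-almost every ξ, w[ξ]-almost every ν belongs to ex 𝒢(γ[ξ]); and for ℙ-almost every ξ, μ[ξ](A) = ∫ ν(A) w[ξ](dν) for every A ∈ ℱ — which is in addition translation invariant: for every j ∈ ℤ^d and every M ∈ e(𝒫(Ω)), w[θ_jξ](θ_jM) = w[ξ](M) for ℙ-almost every ξ, where θ_jM = {θ_jν : ν ∈ M}. -/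

import Mathlib

open MeasureTheory Filter Topology
open scoped ENNReal NNReal

namespace GibbsMeta

variable {S E H : Type*}

/-- The sub-σ-algebra `ℱ_Δ` of the product σ-algebra on `Ω = E^S` generated by the
coordinate projections with indices in `Δ ⊆ S`. -/
def cylSigma (S E : Type*) [MeasurableSpace E] (Δ : Set S) : MeasurableSpace (S → E) :=
  ⨆ i ∈ Δ, MeasurableSpace.comap (fun ω : S → E => ω i) inferInstance

/-- The tail σ-algebra `𝒯 = ⋂_{Λ finite} ℱ_{Λᶜ}`. -/
def tailSigma (S E : Type*) [MeasurableSpace E] : MeasurableSpace (S → E) :=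
  ⨅ Λ : Finset S, cylSigma S E ((↑Λ : Set S)ᶜ)

/-- A specification: a family of proper, consistent probability kernels indexed by
finite volumes, with `γ_Λ(A|·)` being `ℱ_{Λᶜ}`-measurable. -/
structure IsSpecification [MeasurableSpace E]
    (γ : Finset S → (S → E) → Measure (S → E)) : Prop where
  prob : ∀ (Λ : Finset S) (ω : S → E), IsProbabilityMeasure (γ Λ ω)
  meas : ∀ (Λ : Finset S) (A : Set (S → E)), MeasurableSet A →
    Measurable[cylSigma S E ((↑Λ : Set S)ᶜ)] fun ω => γ Λ ω A
  proper : ∀ (Λ : Finset S) (A : Set (S → E)),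
    MeasurableSet[cylSigma S E ((↑Λ : Set S)ᶜ)] A →
    ∀ ω, γ Λ ω A = A.indicator (fun _ => (1 : ℝ≥0∞)) ω
  consistent : ∀ (Δ Λ : Finset S), Δ ⊆ Λ → ∀ (A : Set (S → E)), MeasurableSet A →
    ∀ ω, ∫⁻ σ, γ Δ σ A ∂(γ Λ ω) = γ Λ ω A

/-- The set `𝒢(γ)` of (probability) Gibbs measures for the specification `γ`,
i.e. solutions of the DLR equations. -/
def Gibbs [MeasurableSpace E] (γ : Finset S → (S → E) → Measure (S → E)) :
    Set (Measure (S → E)) :=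
  {μ | IsProbabilityMeasure μ ∧
    ∀ (Λ : Finset S) (A : Set (S → E)), MeasurableSet A → ∫⁻ ω, γ Λ ω A ∂μ = μ A}

/-- The set `ex 𝒢(γ)` of extreme points of the convex set `𝒢(γ)`. -/
def exGibbs [MeasurableSpace E] (γ : Finset S → (S → E) → Measure (S → E)) :
    Set (Measure (S → E)) :=
  {μ | μ ∈ Gibbs γ ∧ ∀ ν₁ ∈ Gibbs γ, ∀ ν₂ ∈ Gibbs γ, ∀ t : ℝ≥0∞, 0 < t → t < 1 →
    μ = t • ν₁ + (1 - t) • ν₂ → ν₁ = μ ∧ ν₂ = μ}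

/-- A random specification: a measurable family of specifications. -/
structure IsRandomSpecification [MeasurableSpace E] [MeasurableSpace H]
    (γ : H → Finset S → (S → E) → Measure (S → E)) : Prop where
  spec : ∀ ξ, IsSpecification (γ ξ)
  jointMeas : ∀ (Λ : Finset S) (A : Set (S → E)), MeasurableSet A →
    Measurable fun p : H × (S → E) => γ p.1 Λ p.2 A

/-- The shift `θ_j` on configurations `ω ∈ E^{ℤᵈ}`: `(θ_jω)_i = ω_{i-j}`. -/
def shift {E : Type*} {d : ℕ} (j : Fin d → ℤ) (ω : (Fin d → ℤ) → E) : (Fin d → ℤ) → E :=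
  fun i => ω (i - j)

/-- The shift `θ_j` on finite volumes: `θ_jΛ = {i + j : i ∈ Λ}`. -/
def shiftFinset {d : ℕ} (j : Fin d → ℤ) (Λ : Finset (Fin d → ℤ)) : Finset (Fin d → ℤ) :=
  Λ.image fun i => i + j

/-- The shift `θ_j` on measures: `(θ_jν)(A) = ν(θ_{-j}A)`, realized as the pushforward
of `ν` under `θ_j`. -/
noncomputable def shiftMeasure {E : Type*} [MeasurableSpace E] {d : ℕ} (j : Fin d → ℤ)
    (ν : MeasureTheory.Measure ((Fin d → ℤ) → E)) : MeasureTheory.Measure ((Fin d → ℤ) → E) :=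
  ν.map (shift j)


section Levy
open ProbabilityTheory

lemma levy_max {Ω : Type*} {m0 : MeasurableSpace Ω} (P : Measure Ω) [IsProbabilityMeasure P]
    (m : ℕ → MeasurableSpace Ω) (hm : ∀ n, m n ≤ m0) (hanti : Antitone m)
    (g : Ω → ℝ) (N : ℕ) (ε : ℝ≥0) :
    ε * P {ω | ∃ k ≤ N, (ε : ℝ) ≤ |(P[g | m k]) ω|} ≤ ENNReal.ofReal (∫ ω, |g ω| ∂P) := by
  let F : Filtration ℕ m0 :=
    { seq := fun i => m (N - i)
      mono' := fun i j hij => hanti (Nat.sub_le_sub_left hij N)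
      le' := fun i => hm _ }
  have hM : Martingale (fun i => P[g | F i]) F P := martingale_condExp g F P
  have hS := hM.submartingale.sup hM.neg.submartingale
  have h0 : 0 ≤ ((fun i => P[g | F i]) ⊔ -(fun i => P[g | F i])) := by
    intro i ω
    change (0:ℝ) ≤ (P[g | F i]) ω ⊔ -(P[g | F i]) ω
    exact abs_nonneg _
  have h := maximal_ineq (ε := ε) hS h0 N
  have hset : {ω | ∃ k ≤ N, (ε : ℝ) ≤ |(P[g | m k]) ω|} = {ω | (ε : ℝ) ≤
      (Finset.range (N + 1)).sup' Finset.nonempty_range_add_one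
        fun k => ((fun i => P[g | F i]) ⊔ -(fun i => P[g | F i])) k ω} := by
    ext ω
    simp only [Set.mem_ofPred_eq, Finset.le_sup'_iff]
    constructor
    · rintro ⟨k, hk, h⟩
      refine ⟨N - k, by simp, ?_⟩
      change (ε:ℝ) ≤ |(P[g | m (N - (N - k))]) ω|
      rwa [Nat.sub_sub_self hk]
    · rintro ⟨k, hk, h⟩
      exact ⟨N - k, by omega, h⟩
  rw [hset]
  refine h.trans (ENNReal.ofReal_le_ofReal ?_)
  refine (setIntegral_le_integral (hS.integrable N) (ae_of_all _ fun ω => h0 N ω)).trans ?_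
  exact integral_abs_condExp_le g

lemma levy_bdd {Ω : Type*} {m0 : MeasurableSpace Ω} (P : Measure Ω) [IsProbabilityMeasure P]
    (m : MeasurableSpace Ω) (f : Ω → ℝ) (hb : ∀ ω, |f ω| ≤ 1) :
    ∀ᵐ ω ∂P, |(P[f | m]) ω| ≤ 1 :=
  ae_bdd_abs_condExp_of_ae_bdd_abs (ae_of_all _ hb)

lemma levy_pyth {Ω : Type*} {m0 : MeasurableSpace Ω} (P : Measure Ω) [IsProbabilityMeasure P]
    (m : ℕ → MeasurableSpace Ω) (hm : ∀ n, m n ≤ m0) (hanti : Antitone m)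
    (f : Ω → ℝ) (hf : Measurable f) (hb : ∀ ω, |f ω| ≤ 1) (n N : ℕ) (h : n ≤ N) :
    ∫ ω, ((P[f | m n]) ω - (P[f | m N]) ω) ^ 2 ∂P
      = ∫ ω, ((P[f | m n]) ω) ^ 2 ∂P - ∫ ω, ((P[f | m N]) ω) ^ 2 ∂P := by
  have hL : ∀ k, MemLp (P[f | m k]) 2 P := fun k =>
    MemLp.condExp (by norm_num) (MemLp.of_bound hf.aestronglyMeasurable 1 (ae_of_all _ hb))
  have hXY : Integrable (P[f | m N] * P[f | m n]) P := (hL N).integrable_mul (hL n)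
  have h1 : P[P[f | m N] * P[f | m n] | m N] =ᵐ[P] P[f | m N] * P[f | m N] := by
    refine (condExp_mul_of_stronglyMeasurable_left stronglyMeasurable_condExp hXY
      integrable_condExp).trans ?_
    filter_upwards [condExp_condExp_of_le (f := f) (μ := P) (hanti h) (hm n)] with ω hω
    simp [hω]
  have h2 : ∫ ω, (P[f | m N]) ω * (P[f | m n]) ω ∂P = ∫ ω, ((P[f | m N]) ω) ^ 2 ∂P := by
    have := integral_condExp (μ := P) (f := P[f | m N] * P[f | m n]) (hm N)
    rw [integral_congr_ae h1] at this
    simp only [Pi.mul_apply] at this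
    rw [← this]
    simp [sq]
  have i1 : Integrable (fun ω => ((P[f | m n]) ω) ^ 2) P := (hL n).integrable_sq
  have i2 : Integrable (fun ω => ((P[f | m N]) ω) ^ 2) P := (hL N).integrable_sq
  have i3 : Integrable (fun ω => (P[f | m N]) ω * (P[f | m n]) ω) P := hXY
  calc ∫ ω, ((P[f | m n]) ω - (P[f | m N]) ω) ^ 2 ∂P
      = ∫ ω, (((P[f | m n]) ω) ^ 2 + ((P[f | m N]) ω) ^ 2
          - 2 * ((P[f | m N]) ω * (P[f | m n]) ω)) ∂P := by
        congr 1; ext ω; ring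
    _ = _ := by
        rw [integral_sub (by exact i1.add i2) (i3.const_mul 2), integral_add i1 i2, integral_const_mul, h2]
        ring

lemma levy_abs_le {Ω : Type*} {m0 : MeasurableSpace Ω} (P : Measure Ω) [IsProbabilityMeasure P]
    (g : Ω → ℝ) (hg : MemLp g 2 P) : (∫ ω, |g ω| ∂P) ^ 2 ≤ ∫ ω, (g ω) ^ 2 ∂P := by
  have h := ProbabilityTheory.variance_nonneg (fun ω => |g ω|) P
  have h2 := ProbabilityTheory.variance_eq_sub (μ := P) (X := fun ω => |g ω|) hg.abs
  rw [h2] at h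
  have h3 : ∫ ω, ((fun ω => |g ω|) ^ 2) ω ∂P = ∫ ω, (g ω) ^ 2 ∂P := by
    congr 1; ext ω; simp
  rw [h3] at h
  linarith

lemma levy_osc {Ω : Type*} {m0 : MeasurableSpace Ω} (P : Measure Ω) [IsProbabilityMeasure P]
    (m : ℕ → MeasurableSpace Ω) (hm : ∀ n, m n ≤ m0) (hanti : Antitone m)
    (f : Ω → ℝ) (ε : ℝ≥0) (δ : ℝ) (n : ℕ)
    (hn : ∀ N, n ≤ N → ∫ ω, |(P[f | m n]) ω - (P[f | m N]) ω| ∂P ≤ δ) :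
    ε * P {ω | ∃ k ≥ n, 2 * (ε : ℝ) ≤ |(P[f | m k]) ω - (P[f | m n]) ω|} ≤ ENNReal.ofReal δ := by
  have hN : ∀ N, n ≤ N → ε * P {ω | ∃ k, n ≤ k ∧ k ≤ N ∧
      2 * (ε : ℝ) ≤ |(P[f | m k]) ω - (P[f | m n]) ω|} ≤ ENNReal.ofReal δ := by
    intro N hnN
    have hmax := levy_max P (fun k => m (n + k)) (fun k => hm _)
      (fun a b hab => hanti (by omega)) (P[f | m n] - P[f | m N]) (N - n) ε
    refine le_trans ?_ (hmax.trans (ENNReal.ofReal_le_ofReal (hn N hnN)))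
    gcongr 1
    have hae : ∀ᵐ ω ∂P, ∀ k, n ≤ k → k ≤ N → (P[P[f | m n] - P[f | m N] | m k]) ω
        = (P[f | m k]) ω - (P[f | m N]) ω := by
      rw [ae_all_iff]; intro k
      by_cases h1 : n ≤ k
      swap
      · exact ae_of_all _ fun _ h => absurd h h1
      by_cases h2 : k ≤ N
      swap
      · exact ae_of_all _ fun _ _ h => absurd h h2
      have a1 := condExp_sub (μ := P) (f := P[f | m n]) (g := P[f | m N])
        integrable_condExp integrable_condExp (m k)
      have a2 := condExp_condExp_of_le (f := f) (μ := P) (hanti h1) (hm n)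
      have a3 : P[P[f | m N] | m k] = P[f | m N] :=
        condExp_of_stronglyMeasurable (hm k) (stronglyMeasurable_condExp.mono (hanti h2))
          integrable_condExp
      filter_upwards [a1, a2] with ω h3 h4 _ _
      rw [h3, Pi.sub_apply, h4, a3]
    refine measure_mono_ae ?_
    filter_upwards [hae] with ω hω
    rintro ⟨k, hk1, hk2, hk⟩
    change ∃ k ≤ N - n, (ε:ℝ) ≤ |(P[P[f | m n] - P[f | m N] | m (n + k)]) ω|
    by_contra hcon
    push Not at hcon
    have e1 := hcon (k - n) (by omega)
    have e2 := hcon 0 (by omega)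
    rw [Nat.add_sub_cancel' hk1, hω k hk1 hk2] at e1
    rw [Nat.add_zero, hω n le_rfl hnN] at e2
    have : |(P[f | m k]) ω - (P[f | m n]) ω| ≤ |(P[f | m k]) ω - (P[f | m N]) ω|
        + |(P[f | m n]) ω - (P[f | m N]) ω| := by
      have := abs_sub ((P[f | m k]) ω - (P[f | m N]) ω) ((P[f | m n]) ω - (P[f | m N]) ω)
      simpa using this
    linarith
  have hU : {ω | ∃ k ≥ n, 2 * (ε : ℝ) ≤ |(P[f | m k]) ω - (P[f | m n]) ω|}
      = ⋃ N, {ω | ∃ k, n ≤ k ∧ k ≤ n + N ∧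
        2 * (ε : ℝ) ≤ |(P[f | m k]) ω - (P[f | m n]) ω|} := by
    ext ω
    simp only [Set.mem_ofPred_eq, Set.mem_iUnion]
    constructor
    · rintro ⟨k, h1, h2⟩
      exact ⟨k, k, h1, by omega, h2⟩
    · rintro ⟨N, k, h1, _, h2⟩
      exact ⟨k, h1, h2⟩
  have hmono : Monotone fun N => {ω | ∃ k, n ≤ k ∧ k ≤ n + N ∧
        2 * (ε : ℝ) ≤ |(P[f | m k]) ω - (P[f | m n]) ω|} := by
    intro a b hab ω
    rintro ⟨k, h1, h2, h3⟩
    exact ⟨k, h1, by omega, h3⟩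
  rw [hU, hmono.measure_iUnion, ENNReal.mul_iSup]
  exact iSup_le fun N => hN _ (by omega)

lemma levy_cauchy {Ω : Type*} {m0 : MeasurableSpace Ω} (P : Measure Ω) [IsProbabilityMeasure P]
    (m : ℕ → MeasurableSpace Ω) (hm : ∀ n, m n ≤ m0) (hanti : Antitone m)
    (f : Ω → ℝ) (hf : Measurable f) (hb : ∀ ω, |f ω| ≤ 1) :
    ∀ᵐ ω ∂P, CauchySeq fun n => (P[f | m n]) ω := by
  have hL : ∀ k, MemLp (P[f | m k]) 2 P := fun k =>
    MemLp.condExp (by norm_num) (MemLp.of_bound hf.aestronglyMeasurable 1 (ae_of_all _ hb))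
  -- L1 Cauchy
  have hL1 : ∀ δ > 0, ∃ n, ∀ N, n ≤ N → ∫ ω, |(P[f | m n]) ω - (P[f | m N]) ω| ∂P ≤ δ := by
    intro δ hδ
    have hant : Antitone fun n => ∫ ω, ((P[f | m n]) ω) ^ 2 ∂P := by
      intro n N h
      have := levy_pyth P m hm hanti f hf hb n N h
      have h0 : 0 ≤ ∫ ω, ((P[f | m n]) ω - (P[f | m N]) ω) ^ 2 ∂P :=
        integral_nonneg fun ω => sq_nonneg _
      dsimp only; linarith
    have hbd : BddBelow (Set.range fun n => ∫ ω, ((P[f | m n]) ω) ^ 2 ∂P) :=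
      ⟨0, by rintro _ ⟨n, rfl⟩; exact integral_nonneg fun ω => sq_nonneg _⟩
    have ht := tendsto_atTop_ciInf hant hbd
    obtain ⟨n, hn⟩ := ((Metric.cauchySeq_iff'.1 ht.cauchySeq) (δ ^ 2) (by positivity))
    refine ⟨n, fun N hN => ?_⟩
    have h1 := levy_pyth P m hm hanti f hf hb n N hN
    have h2 := hn N hN
    rw [Real.dist_eq, abs_sub_comm] at h2
    have h3 := (le_abs_self _).trans_lt h2
    have h4 := levy_abs_le P _ ((hL n).sub (hL N))
    simp only [Pi.sub_apply] at h4
    rw [h1] at h4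
    exact (le_abs_self _).trans (abs_le_of_sq_le_sq (by linarith) hδ.le)
  have hε : ∀ᵐ ω ∂P, ∀ i : ℕ, ∃ n, ∀ k ≥ n,
      |(P[f | m k]) ω - (P[f | m n]) ω| < 2 * (1 / ((i:ℝ) + 1)) := by
    rw [ae_all_iff]; intro i
    set ε : ℝ≥0 := 1 / ((i : ℝ≥0) + 1) with hεdef
    have hεr : (ε : ℝ) = 1 / ((i:ℝ) + 1) := by simp [hεdef]
    have hεpos : 0 < ε := by positivity
    rw [← hεr]
    rw [ae_iff]
    by_contra hne
    set B := {a | ¬ ∃ n, ∀ k ≥ n, |(P[f | m k]) a - (P[f | m n]) a| < 2 * (ε:ℝ)} with hB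
    have hle : ∀ δ > 0, ε * P B ≤ ENNReal.ofReal δ := by
      intro δ hδ
      obtain ⟨n, hn⟩ := hL1 δ hδ
      refine le_trans ?_ (levy_osc P m hm hanti f ε δ n hn)
      gcongr
      intro ω hω
      simp only [hB, Set.mem_ofPred_eq] at hω
      push Not at hω
      exact hω n
    have hpos : 0 < ε * P B := by
      exact ENNReal.mul_pos (by exact_mod_cast hεpos.ne') hne
    have hfin : ε * P B ≠ ⊤ := ENNReal.mul_ne_top (by simp) (measure_ne_top _ _)
    have h1 := ENNReal.toReal_pos hpos.ne' hfin
    have h2 := hle ((ε * P B).toReal / 2) (by linarith)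
    have h3 := ENNReal.toReal_le_of_le_ofReal (by linarith) h2
    linarith
  filter_upwards [hε] with ω hω
  rw [Metric.cauchySeq_iff']
  intro η hη
  obtain ⟨i, hi⟩ := exists_nat_one_div_lt (half_pos hη)
  obtain ⟨n, hn⟩ := hω i
  refine ⟨n, fun k hk => ?_⟩
  rw [Real.dist_eq]
  have := hn k hk
  linarith

/-- Lévy downward theorem for bounded functions. -/
lemma levy_down {Ω : Type*} {m0 : MeasurableSpace Ω} (P : Measure Ω) [IsProbabilityMeasure P]
    (m : ℕ → MeasurableSpace Ω) (hm : ∀ n, m n ≤ m0) (hanti : Antitone m)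
    (f : Ω → ℝ) (hf : Measurable f) (hb : ∀ ω, |f ω| ≤ 1) :
    ∀ᵐ ω ∂P, Tendsto (fun n => (P[f | m n]) ω) atTop (𝓝 ((P[f | ⨅ n, m n]) ω)) := by
  have hfi : Integrable f P := Integrable.of_bound hf.aestronglyMeasurable 1 (ae_of_all _ hb)
  have hminf : (⨅ n, m n) ≤ m0 := (iInf_le _ 0).trans (hm 0)
  let L : Ω → ℝ := fun ω => limsup (fun n => (P[f | m n]) ω) atTop
  have hLt : ∀ᵐ ω ∂P, Tendsto (fun n => (P[f | m n]) ω) atTop (𝓝 (L ω)) := by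
    filter_upwards [levy_cauchy P m hm hanti f hf hb] with ω hω
    obtain ⟨x, hx⟩ := cauchySeq_tendsto_of_complete hω
    have : L ω = x := hx.limsup_eq
    rwa [this]
  have hLm : Measurable[⨅ n, m n] L := by
    intro s hs
    rw [MeasurableSpace.measurableSet_iInf]
    intro k
    have hLk : L = fun ω => limsup (fun n => (P[f | m (n + k)]) ω) atTop := by
      ext ω
      exact (limsup_nat_add (fun n => (P[f | m n]) ω) k).symm
    have : Measurable[m k] L := by
      rw [hLk]
      refine Measurable.limsup fun i => ?_
      exact (stronglyMeasurable_condExp.mono (hanti (by omega))).measurable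
    exact this hs
  have hLb : ∀ᵐ ω ∂P, ‖L ω‖ ≤ 1 := by
    have : ∀ᵐ ω ∂P, ∀ n, |(P[f | m n]) ω| ≤ 1 := by
      rw [ae_all_iff]; exact fun n => levy_bdd P (m n) f hb
    filter_upwards [hLt, this] with ω h1 h2
    exact le_of_tendsto h1.abs (Eventually.of_forall h2)
  have hLi : Integrable L P :=
    Integrable.of_bound (hLm.mono hminf le_rfl).aestronglyMeasurable 1 hLb
  have hL : L =ᵐ[P] P[f | ⨅ n, m n] := by
    refine ae_eq_condExp_of_forall_setIntegral_eq hminf hfi (fun s _ _ => hLi.integrableOn) ?_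
      hLm.stronglyMeasurable.aestronglyMeasurable
    intro s hs _
    have hconst : ∀ n, ∫ x in s, (P[f | m n]) x ∂P = ∫ x in s, f x ∂P := fun n =>
      setIntegral_condExp (hm n) hfi (MeasurableSpace.measurableSet_iInf.1 hs n)
    have ht := tendsto_integral_of_dominated_convergence (μ := P.restrict s)
      (F := fun n => P[f | m n]) (f := L) (fun _ => 1)
      (fun n => (integrable_condExp (m := m n)).aestronglyMeasurable.restrict)
      (integrable_const _)
      (fun n => ae_restrict_of_ae (levy_bdd P (m n) f hb))
      (ae_restrict_of_ae hLt)
    simp only [hconst] at ht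
    exact tendsto_nhds_unique ht tendsto_const_nhds
  filter_upwards [hLt, hL] with ω h1 h2
  rwa [← h2]

end Levy

section Spec
open ProbabilityTheory

/-- countable generating π-system -/
def cset (Ω : Type*) [MeasurableSpace Ω] [StandardBorelSpace Ω] (q : ℚ) : Set Ω :=
  embeddingReal Ω ⁻¹' Set.Iic (q : ℝ)

lemma measurableSet_cset (Ω : Type*) [MeasurableSpace Ω] [StandardBorelSpace Ω] (q : ℚ) :
    MeasurableSet (cset Ω q) :=
  (measurableEmbedding_embeddingReal Ω).measurable measurableSet_Iic

lemma real_ext {μ ν : Measure ℝ} [IsProbabilityMeasure μ] [IsProbabilityMeasure ν]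
    (h : ∀ q : ℚ, μ (Set.Iic (q:ℝ)) = ν (Set.Iic (q:ℝ))) : μ = ν := by
  refine ext_of_generate_finite _ ((BorelSpace.measurable_eq (α := ℝ)).trans
    Real.borel_eq_generateFrom_Iic_rat) Real.isPiSystem_Iic_rat ?_ (by simp)
  intro s hs
  simp only [Set.mem_iUnion, Set.mem_singleton_iff] at hs
  obtain ⟨q, rfl⟩ := hs
  exact h q

lemma cset_ext {Ω : Type*} [MeasurableSpace Ω] [StandardBorelSpace Ω] {μ ν : Measure Ω}
    [IsProbabilityMeasure μ] [IsProbabilityMeasure ν]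
    (h : ∀ q : ℚ, μ (cset Ω q) = ν (cset Ω q)) : μ = ν := by
  have he := measurableEmbedding_embeddingReal Ω
  have : IsProbabilityMeasure (μ.map (embeddingReal Ω)) :=
    Measure.isProbabilityMeasure_map he.measurable.aemeasurable
  have : IsProbabilityMeasure (ν.map (embeddingReal Ω)) :=
    Measure.isProbabilityMeasure_map he.measurable.aemeasurable
  have h1 : μ.map (embeddingReal Ω) = ν.map (embeddingReal Ω) := by
    refine real_ext fun q => ?_
    rw [Measure.map_apply he.measurable measurableSet_Iic,
      Measure.map_apply he.measurable measurableSet_Iic]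
    exact h q
  rw [← he.comap_map μ, h1, he.comap_map]

lemma exists_limit {X Ω : Type*} [MeasurableSpace X] [MeasurableSpace Ω] [StandardBorelSpace Ω]
    [Nonempty Ω] (k : ℕ → X → Measure Ω)
    (hk : ∀ n A, MeasurableSet A → Measurable fun x => k n x A) :
    ∃ p : X → Measure Ω, Measurable p ∧ (∀ x, IsProbabilityMeasure (p x)) ∧
      ∀ x (ν : Measure Ω), IsProbabilityMeasure ν →
        (∀ q : ℚ, Tendsto (fun n => (k n x).real (cset Ω q)) atTop (𝓝 (ν.real (cset Ω q)))) →
        p x = ν := by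
  have he := measurableEmbedding_embeddingReal Ω
  obtain ⟨g, hg, hge⟩ := he.exists_measurable_extend measurable_id (fun _ => inferInstance)
  let f : X → ℚ → ℝ := fun x q => limsup (fun n => (k n x).real (cset Ω q)) atTop
  have hf : Measurable f := by
    refine measurable_pi_lambda _ fun q => ?_
    exact Measurable.limsup fun n => (hk n _ (measurableSet_cset Ω q)).ennreal_toReal
  let K : X → Measure ℝ := fun x => (stieltjesOfMeasurableRat f hf x).measure
  have hKm : Measurable K := measurable_measure_stieltjesOfMeasurableRat hf
  have hKp : ∀ x, IsProbabilityMeasure (K x) := fun x =>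
    ⟨measure_stieltjesOfMeasurableRat_univ hf x⟩
  refine ⟨fun x => (K x).map g, (Measure.measurable_map g hg).comp hKm,
    fun x => Measure.isProbabilityMeasure_map hg.aemeasurable, ?_⟩
  intro x ν hν hlim
  have hνe : IsProbabilityMeasure (ν.map (embeddingReal Ω)) :=
    Measure.isProbabilityMeasure_map he.measurable.aemeasurable
  have hfx : ∀ q : ℚ, f x q = (ν.map (embeddingReal Ω)).real (Set.Iic (q:ℝ)) := by
    intro q
    rw [map_measureReal_apply he.measurable measurableSet_Iic]
    exact (hlim q).limsup_eq
  have hcdf : ∀ q : ℚ, f x q = cdf (ν.map (embeddingReal Ω)) (q:ℝ) := by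
    intro q; rw [hfx, cdf_eq_real]
  have hpt : IsRatStieltjesPoint f x := by
    constructor
    · intro a b hab
      rw [hcdf, hcdf]; exact monotone_cdf _ (by exact_mod_cast hab)
    · have := (tendsto_cdf_atTop (ν.map (embeddingReal Ω))).comp
        (tendsto_ratCast_atTop_iff.2 tendsto_id)
      exact this.congr fun q => (hcdf q).symm
    · have := (tendsto_cdf_atBot (ν.map (embeddingReal Ω))).comp
        (tendsto_ratCast_atBot_iff.2 tendsto_id)
      exact this.congr fun q => (hcdf q).symm
    · intro t
      have := (cdf (ν.map (embeddingReal Ω))).iInf_rat_gt_eq (t:ℝ)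
      rw [hcdf, ← this]
      simp only [hcdf]
      refine (Equiv.iInf_congr (Equiv.subtypeEquivRight fun r => ?_) fun r => ?_)
      · simp
      · rfl
  have hK : K x = ν.map (embeddingReal Ω) := by
    refine real_ext fun q => ?_
    rw [measure_stieltjesOfMeasurableRat_Iic, stieltjesOfMeasurableRat_eq,
      toRatCDF_of_isRatStieltjesPoint hpt, hfx, ofReal_measureReal]
  change (K x).map g = ν
  rw [hK, Measure.map_map hg he.measurable, hge, Measure.map_id]

variable [MeasurableSpace E]

lemma meas_eval {X Ω : Type*} [MeasurableSpace X] [MeasurableSpace Ω] {f : X → Measure Ω}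
    (hf : Measurable f) {A : Set Ω} (hA : MeasurableSet A) : Measurable fun x => f x A :=
  (Measure.measurable_coe hA).comp hf

lemma cyl_le (Δ : Set S) : cylSigma S E Δ ≤ MeasurableSpace.pi :=
  iSup₂_le fun i _ => le_iSup (fun a => MeasurableSpace.comap (fun ω : S → E => ω a) _) i

lemma cyl_mono {Δ Δ' : Set S} (h : Δ ⊆ Δ') : cylSigma S E Δ ≤ cylSigma S E Δ' :=
  biSup_mono fun _ hi => h hi

lemma tail_le (Λ : Finset S) : tailSigma S E ≤ cylSigma S E ((↑Λ : Set S)ᶜ) := iInf_le _ Λ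

lemma tail_le' : tailSigma S E ≤ MeasurableSpace.pi := (tail_le ∅).trans (cyl_le _)

lemma tail_eq (V : ℕ → Finset S) (hV : ∀ Λ, ∃ n, Λ ⊆ V n) :
    ⨅ n, cylSigma S E ((↑(V n) : Set S)ᶜ) = tailSigma S E := by
  refine le_antisymm (le_iInf fun Λ => ?_) (le_iInf fun n => tail_le _)
  obtain ⟨n, hn⟩ := hV Λ
  refine (iInf_le _ n).trans (cyl_mono ?_)
  exact Set.compl_subset_compl.2 (by exact_mod_cast hn)

variable {γ : Finset S → (S → E) → Measure (S → E)}

lemma spec_meas (hγ : IsSpecification γ) (Λ : Finset S) : Measurable (γ Λ) :=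
  Measure.measurable_of_measurable_coe _ fun A hA => (hγ.meas Λ A hA).mono (cyl_le _) le_rfl

lemma spec_inter (hγ : IsSpecification γ) (Λ : Finset S) (A B : Set (S → E))
    (hB : MeasurableSet[cylSigma S E ((↑Λ : Set S)ᶜ)] B) (ω : S → E) :
    γ Λ ω (A ∩ B) = B.indicator (fun ω => γ Λ ω A) ω := by
  have := hγ.prob Λ ω
  have hB' := cyl_le _ _ hB
  by_cases h : ω ∈ B
  · have h1 : γ Λ ω Bᶜ = 0 := by
      rw [hγ.proper Λ Bᶜ hB.compl]; simp [h]
    rw [Set.indicator_of_mem h]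
    refine measure_congr ?_
    have h2 : ∀ᵐ σ ∂(γ Λ ω), σ ∈ B := by rwa [ae_iff]
    filter_upwards [h2] with σ hσ
    exact propext ⟨fun h => h.1, fun h => ⟨h, hσ⟩⟩
  · have h1 : γ Λ ω B = 0 := by
      rw [hγ.proper Λ B hB]; simp [h]
    rw [Set.indicator_of_notMem h]
    exact measure_mono_null Set.inter_subset_right h1

lemma gamma_condExp (hγ : IsSpecification γ) {P : Measure (S → E)} (hP : P ∈ Gibbs γ)
    (Λ : Finset S) {A : Set (S → E)} (hA : MeasurableSet A) :
    (fun ω => (γ Λ ω).real A) =ᵐ[P] P[A.indicator (fun _ => (1:ℝ)) | cylSigma S E ((↑Λ : Set S)ᶜ)] := by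
  have hp := hP.1
  have hpr := hγ.prob Λ
  have hm : Measurable[cylSigma S E ((↑Λ : Set S)ᶜ)] fun ω => (γ Λ ω).real A :=
    (hγ.meas Λ A hA).ennreal_toReal
  have hi : Integrable (fun ω => (γ Λ ω).real A) P :=
    Integrable.of_bound (hm.mono (cyl_le _) le_rfl).aestronglyMeasurable 1
      (ae_of_all _ fun ω => by
        rw [Real.norm_of_nonneg measureReal_nonneg]; exact measureReal_le_one)
  refine ae_eq_condExp_of_forall_setIntegral_eq (cyl_le _) ?_ (fun s _ _ => hi.integrableOn) ?_
    hm.stronglyMeasurable.aestronglyMeasurable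
  · exact (integrable_const (1:ℝ)).indicator hA
  intro B hB _
  have hB' := cyl_le _ _ hB
  rw [integral_indicator_const _ hA]
  have h1 : ∫ ω in B, (γ Λ ω).real A ∂P = (∫⁻ ω in B, γ Λ ω A ∂P).toReal :=
    integral_toReal (meas_eval (spec_meas hγ Λ) hA).aemeasurable
      (ae_of_all _ fun ω => measure_lt_top _ _)
  rw [h1, ← lintegral_indicator hB']
  have h2 : ∀ ω, B.indicator (fun ω => γ Λ ω A) ω = γ Λ ω (A ∩ B) := fun ω =>
    (spec_inter hγ Λ A B hB ω).symm
  simp_rw [h2]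
  rw [hP.2 Λ _ (hA.inter hB')]
  simp [measureReal_def, Measure.restrict_apply hA]

lemma indicator_abs_le {Ω : Type*} (A : Set Ω) (ω : Ω) : |A.indicator (fun _ => (1:ℝ)) ω| ≤ 1 := by
  by_cases h : ω ∈ A <;> simp [h]

lemma gamma_tendsto (hγ : IsSpecification γ) {P : Measure (S → E)} (hP : P ∈ Gibbs γ)
    {V : ℕ → Finset S} (hVm : Monotone V) (hV : ∀ Λ, ∃ n, Λ ⊆ V n)
    {A : Set (S → E)} (hA : MeasurableSet A) :
    ∀ᵐ ω ∂P, Tendsto (fun n => (γ (V n) ω).real A) atTop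
      (𝓝 ((P[A.indicator (fun _ => (1:ℝ)) | tailSigma S E]) ω)) := by
  have hp := hP.1
  have h1 := levy_down P (fun n => cylSigma S E ((↑(V n) : Set S)ᶜ)) (fun n => cyl_le _)
    (fun a b hab => cyl_mono (Set.compl_subset_compl.2 (by exact_mod_cast hVm hab)))
    (A.indicator (fun _ => (1:ℝ))) (measurable_const.indicator hA) (indicator_abs_le A)
  rw [tail_eq V hV] at h1
  have h2 : ∀ᵐ ω ∂P, ∀ n, (γ (V n) ω).real A =
      (P[A.indicator (fun _ => (1:ℝ)) | cylSigma S E ((↑(V n) : Set S)ᶜ)]) ω := by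
    rw [ae_all_iff]; exact fun n => gamma_condExp hγ hP (V n) hA
  filter_upwards [h1, h2] with ω h1 h2
  exact h1.congr fun n => (h2 n).symm

/-- `p` is a universal version of the conditional probability given the tail. -/
structure IsLim [StandardBorelSpace (S → E)] (γ : Finset S → (S → E) → Measure (S → E))
    (V : ℕ → Finset S) (p : (S → E) → Measure (S → E)) : Prop where
  meas : Measurable p
  prob : ∀ ω, IsProbabilityMeasure (p ω)
  lim : ∀ ω (ν : Measure (S → E)), IsProbabilityMeasure ν →
        (∀ q : ℚ, Tendsto (fun n => (γ (V n) ω).real (cset (S → E) q)) atTop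
          (𝓝 (ν.real (cset (S → E) q)))) → p ω = ν

variable [StandardBorelSpace (S → E)] {V : ℕ → Finset S} {p : (S → E) → Measure (S → E)}

lemma p_eq_kernel (hγ : IsSpecification γ) (hVm : Monotone V) (hV : ∀ Λ, ∃ n, Λ ⊆ V n)
    (hp : IsLim γ V p) {P : Measure (S → E)} [IsProbabilityMeasure P] (hP : P ∈ Gibbs γ) :
    ∀ᵐ ω ∂P, p ω = condExpKernel P (tailSigma S E) ω := by
  have : Nonempty (S → E) := nonempty_of_isProbabilityMeasure P
  have h1 : ∀ᵐ ω ∂P, ∀ q : ℚ, Tendsto (fun n => (γ (V n) ω).real (cset (S → E) q)) atTop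
      (𝓝 ((P[(cset (S → E) q).indicator (fun _ => (1:ℝ)) | tailSigma S E]) ω)) := by
    rw [ae_all_iff]; exact fun q => gamma_tendsto hγ hP hVm hV (measurableSet_cset _ q)
  have h2 : ∀ᵐ ω ∂P, ∀ q : ℚ, (condExpKernel P (tailSigma S E) ω).real (cset (S → E) q) =
      (P[(cset (S → E) q).indicator (fun _ => (1:ℝ)) | tailSigma S E]) ω := by
    rw [ae_all_iff]; exact fun q => condExpKernel_ae_eq_condExp tail_le' (measurableSet_cset _ q)
  filter_upwards [h1, h2] with ω h1 h2
  refine hp.lim ω _ inferInstance fun q => ?_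
  rw [h2]; exact h1 q

lemma p_integral (hγ : IsSpecification γ) (hVm : Monotone V) (hV : ∀ Λ, ∃ n, Λ ⊆ V n)
    (hp : IsLim γ V p) {P : Measure (S → E)} (hP : P ∈ Gibbs γ)
    {g : (S → E) → ℝ} (hg : Integrable g P) :
    P[g | tailSigma S E] =ᵐ[P] fun ω => ∫ σ, g σ ∂(p ω) := by
  have := hP.1
  filter_upwards [p_eq_kernel hγ hVm hV hp hP,
    condExp_ae_eq_integral_condExpKernel (μ := P) tail_le' hg] with ω h1 h2
  rw [h2, h1]

lemma p_real (hγ : IsSpecification γ) (hVm : Monotone V) (hV : ∀ Λ, ∃ n, Λ ⊆ V n)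
    (hp : IsLim γ V p) {P : Measure (S → E)} (hP : P ∈ Gibbs γ)
    {A : Set (S → E)} (hA : MeasurableSet A) :
    (fun ω => (p ω).real A) =ᵐ[P] P[A.indicator (fun _ => (1:ℝ)) | tailSigma S E] := by
  have := hP.1
  filter_upwards [p_eq_kernel hγ hVm hV hp hP,
    condExpKernel_ae_eq_condExp (μ := P) tail_le' hA] with ω h1 h2
  rw [h1, h2]

lemma p_int (hp : IsLim γ V p) (P : Measure (S → E)) [IsProbabilityMeasure P]
    {A : Set (S → E)} (hA : MeasurableSet A) : Integrable (fun ω => (p ω).real A) P := by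
  have := hp.prob
  exact Integrable.of_bound ((meas_eval hp.meas hA).ennreal_toReal).aestronglyMeasurable 1
      (ae_of_all _ fun ω => by
        rw [Real.norm_of_nonneg measureReal_nonneg]; exact measureReal_le_one)

lemma p_decomp (hγ : IsSpecification γ) (hVm : Monotone V) (hV : ∀ Λ, ∃ n, Λ ⊆ V n)
    (hp : IsLim γ V p) {P : Measure (S → E)} (hP : P ∈ Gibbs γ)
    {A : Set (S → E)} (hA : MeasurableSet A) : ∫⁻ ω, p ω A ∂P = P A := by
  have := hP.1
  have hpp := hp.prob
  have h1 : ∫ ω, (p ω).real A ∂P = P.real A := by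
    rw [integral_congr_ae (p_real hγ hVm hV hp hP hA), integral_condExp tail_le',
      integral_indicator_const _ hA]
    simp
  have h2 := ofReal_integral_eq_lintegral_ofReal (p_int hp P hA)
    (ae_of_all _ fun ω => measureReal_nonneg)
  rw [h1, ofReal_measureReal] at h2
  rw [h2]
  exact lintegral_congr fun ω => (ofReal_measureReal (μ := p ω) (s := A)).symm

/-- a measurable set of measures contained in `exGibbs`. -/
def Good (γ : Finset S → (S → E) → Measure (S → E)) (p : (S → E) → Measure (S → E)) :
    Set (Measure (S → E)) :=
  {ν | ν Set.univ = 1 ∧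
    (∀ (Λ : Finset S) (q : ℚ), ∫⁻ ω, γ Λ ω (cset (S → E) q) ∂ν = ν (cset (S → E) q)) ∧
    (∀ q : ℚ, ∫⁻ ω, p ω (cset (S → E) q) ∂ν = ν (cset (S → E) q)) ∧
    (∀ q : ℚ, ∫⁻ ω, (p ω (cset (S → E) q)) ^ 2 ∂ν = (ν (cset (S → E) q)) ^ 2)}

lemma good_meas [Countable S] (hγ : IsSpecification γ) (hp : IsLim γ V p) :
    MeasurableSet (Good γ p) := by
  have hc := measurableSet_cset (S → E)
  have h1 : MeasurableSet {ν : Measure (S → E) | ν Set.univ = 1} :=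
    (Measure.measurable_coe MeasurableSet.univ) (measurableSet_singleton 1)
  have h2 : MeasurableSet {ν : Measure (S → E) | ∀ (Λ : Finset S) (q : ℚ),
      ∫⁻ ω, γ Λ ω (cset (S → E) q) ∂ν = ν (cset (S → E) q)} := by
    refine MeasurableSet.congr (MeasurableSet.iInter fun Λ => MeasurableSet.iInter fun q =>
      measurableSet_eq_fun (Measure.measurable_lintegral (meas_eval (spec_meas hγ Λ) (hc q)))
        (Measure.measurable_coe (hc q))) ?_
    ext ν; simp
  have h3 : MeasurableSet {ν : Measure (S → E) | ∀ (q : ℚ),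
      ∫⁻ ω, p ω (cset (S → E) q) ∂ν = ν (cset (S → E) q)} := by
    refine MeasurableSet.congr (MeasurableSet.iInter fun q =>
      measurableSet_eq_fun (Measure.measurable_lintegral (meas_eval hp.meas (hc q)))
        (Measure.measurable_coe (hc q))) ?_
    ext ν; simp
  have h4 : MeasurableSet {ν : Measure (S → E) | ∀ (q : ℚ),
      ∫⁻ ω, (p ω (cset (S → E) q)) ^ 2 ∂ν = (ν (cset (S → E) q)) ^ 2} := by
    refine MeasurableSet.congr (MeasurableSet.iInter fun q =>
      measurableSet_eq_fun (Measure.measurable_lintegral ((meas_eval hp.meas (hc q)).pow_const 2))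
        ((Measure.measurable_coe (hc q)).pow_const 2)) ?_
    ext ν; simp
  exact h1.inter (h2.inter (h3.inter h4))

lemma good_gibbs (hγ : IsSpecification γ) {ν : Measure (S → E)} (hν : ν ∈ Good γ p) :
    ν ∈ Gibbs γ := by
  have hp : IsProbabilityMeasure ν := ⟨hν.1⟩
  refine ⟨hp, fun Λ A hA => ?_⟩
  have hm := spec_meas hγ Λ
  have hpr := hγ.prob Λ
  have : IsProbabilityMeasure (ν.bind (γ Λ)) := by
    constructor
    rw [Measure.bind_apply MeasurableSet.univ hm.aemeasurable]; simp
  have h : ν.bind (γ Λ) = ν := by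
    refine cset_ext fun q => ?_
    rw [Measure.bind_apply (measurableSet_cset _ q) hm.aemeasurable]
    exact hν.2.1 Λ q
  rw [← Measure.bind_apply hA hm.aemeasurable, h]

lemma good_const (hp : IsLim γ V p) {ν : Measure (S → E)} (hν : ν ∈ Good γ p) :
    ∀ᵐ ω ∂ν, p ω = ν := by
  have hprob : IsProbabilityMeasure ν := ⟨hν.1⟩
  have hpp := hp.prob
  have h : ∀ᵐ ω ∂ν, ∀ q : ℚ, p ω (cset (S → E) q) = ν (cset (S → E) q) := by
    rw [ae_all_iff]; intro q
    have hc := measurableSet_cset (S → E) q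
    have hm := meas_eval hp.meas hc
    set C := cset (S → E) q
    have e1 : ∫ ω, (p ω).real C ∂ν = ν.real C := by
      have := integral_toReal hm.aemeasurable (ae_of_all ν fun ω => measure_lt_top (p ω) C)
      rw [hν.2.2.1 q] at this
      exact this
    have e2 : ∫ ω, ((p ω).real C) ^ 2 ∂ν = (ν.real C) ^ 2 := by
      have := integral_toReal (hm.pow_const 2).aemeasurable
        (ae_of_all ν fun ω => ENNReal.pow_lt_top (measure_lt_top (p ω) C))
      rw [hν.2.2.2 q] at this
      simp only [ENNReal.toReal_pow] at this
      exact this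
    have i1 := p_int hp ν hc
    have i2 : Integrable (fun ω => ((p ω).real C) ^ 2) ν :=
      Integrable.of_bound ((hm.ennreal_toReal).pow_const 2).aestronglyMeasurable 1
      (ae_of_all _ fun ω => by
        rw [Real.norm_of_nonneg (by positivity)]
        exact pow_le_one₀ measureReal_nonneg measureReal_le_one)
    have e3 : ∫ ω, ((p ω).real C - ν.real C) ^ 2 ∂ν = 0 := by
      have : ∀ ω, ((p ω).real C - ν.real C) ^ 2
          = ((p ω).real C) ^ 2 - (2 * ν.real C * (p ω).real C - (ν.real C) ^ 2) := by
        intro ω; ring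
      simp_rw [this]
      rw [integral_sub i2 (by exact (i1.const_mul _).sub (integrable_const _)),
        integral_sub (i1.const_mul _) (integrable_const _), integral_const_mul, e1, e2]
      simp; ring
    have i3 : Integrable (fun ω => ((p ω).real C - ν.real C) ^ 2) ν := by
      have : (fun ω => ((p ω).real C - ν.real C) ^ 2)
          = fun ω => ((p ω).real C) ^ 2 - (2 * ν.real C * (p ω).real C - (ν.real C) ^ 2) := by
        ext ω; ring
      rw [this]
      exact i2.sub ((i1.const_mul _).sub (integrable_const _))
    rw [integral_eq_zero_iff_of_nonneg (fun ω => sq_nonneg _) i3] at e3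
    filter_upwards [e3] with ω hω
    have : (p ω).real C = ν.real C := by
      have := pow_eq_zero_iff (two_ne_zero) |>.1 hω
      linarith
    rw [← ofReal_measureReal (μ := p ω), this, ofReal_measureReal]
  filter_upwards [h] with ω hω
  exact cset_ext hω

lemma good_ex (hγ : IsSpecification γ) (hVm : Monotone V) (hV : ∀ Λ, ∃ n, Λ ⊆ V n)
    (hp : IsLim γ V p) : Good γ p ⊆ exGibbs γ := by
  intro ν hν
  have hc := good_const hp hν
  have key : ∀ ν₁ ∈ Gibbs γ, ν₁ ≪ ν → ν₁ = ν := by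
    intro ν₁ h1 hac
    have := h1.1
    ext A hA
    rw [← p_decomp hγ hVm hV hp h1 hA]
    have : ∀ᵐ ω ∂ν₁, p ω A = ν A := by
      filter_upwards [hac.ae_le hc] with ω hω
      rw [hω]
    rw [lintegral_congr_ae this]; simp
  refine ⟨good_gibbs hγ hν, fun ν₁ h1 ν₂ h2 t ht0 ht1 heq => ⟨key ν₁ h1 ?_, key ν₂ h2 ?_⟩⟩
  · refine Measure.AbsolutelyContinuous.mk fun s _ hs => ?_
    rw [heq] at hs
    simp only [Measure.coe_add, Measure.coe_smul, Pi.add_apply, Pi.smul_apply, smul_eq_mul,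
      add_eq_zero, mul_eq_zero] at hs
    exact hs.1.resolve_left ht0.ne'
  · refine Measure.AbsolutelyContinuous.mk fun s _ hs => ?_
    rw [heq] at hs
    simp only [Measure.coe_add, Measure.coe_smul, Pi.add_apply, Pi.smul_apply, smul_eq_mul,
      add_eq_zero, mul_eq_zero] at hs
    exact hs.2.resolve_left (tsub_pos_of_lt ht1).ne'

lemma ae_good [Countable S] (hγ : IsSpecification γ) (hVm : Monotone V)
    (hV : ∀ Λ, ∃ n, Λ ⊆ V n) (hp : IsLim γ V p) {P : Measure (S → E)} (hP : P ∈ Gibbs γ) :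
    ∀ᵐ ω ∂P, p ω ∈ Good γ p := by
  have := hP.1
  have hpp := hp.prob
  have hpr := hγ.prob
  -- passing from Bochner integrals to lintegrals
  have conv : ∀ (ω : S → E) (g : (S → E) → ℝ≥0∞) (c : ℝ≥0∞), Measurable g → (∀ σ, g σ ≤ 1) →
      c ≠ ⊤ → ∫ σ, (g σ).toReal ∂(p ω) = c.toReal → ∫⁻ σ, g σ ∂(p ω) = c := by
    intro ω g c hg hb hc h
    rw [integral_toReal hg.aemeasurable
      (ae_of_all _ fun σ => (hb σ).trans_lt ENNReal.one_lt_top)] at h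
    refine (ENNReal.toReal_eq_toReal_iff' ?_ hc).1 h
    refine ne_top_of_le_ne_top ENNReal.one_ne_top ?_
    calc ∫⁻ σ, g σ ∂(p ω) ≤ ∫⁻ σ, 1 ∂(p ω) := lintegral_mono hb
      _ = 1 := by simp
  have a1 : ∀ᵐ ω ∂P, ∀ (Λ : Finset S) (q : ℚ),
      ∫⁻ σ, γ Λ σ (cset (S → E) q) ∂(p ω) = p ω (cset (S → E) q) := by
    rw [ae_all_iff]; intro Λ; rw [ae_all_iff]; intro q
    have hc := measurableSet_cset (S → E) q
    have hm := meas_eval (spec_meas hγ Λ) hc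
    have hi : Integrable (fun σ => (γ Λ σ).real (cset (S → E) q)) P :=
      Integrable.of_bound hm.ennreal_toReal.aestronglyMeasurable 1 (ae_of_all _ fun ω => by
        rw [Real.norm_of_nonneg measureReal_nonneg]; exact measureReal_le_one)
    have b1 := p_integral hγ hVm hV hp hP hi
    have b2 := condExp_congr_ae (m := tailSigma S E) (gamma_condExp hγ hP Λ hc)
    have b3 := condExp_condExp_of_le (μ := P)
      (f := (cset (S → E) q).indicator (fun _ => (1:ℝ))) (tail_le Λ) (cyl_le _)
    have b4 := p_real hγ hVm hV hp hP hc
    filter_upwards [b1, b2, b3, b4] with ω b1 b2 b3 b4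
    refine conv ω _ _ hm (fun σ => prob_le_one) (measure_ne_top _ _) ?_
    exact b1.symm.trans (b2.trans (b3.trans b4.symm))
  have a2 : ∀ᵐ ω ∂P, ∀ (q : ℚ),
      ∫⁻ σ, p σ (cset (S → E) q) ∂(p ω) = p ω (cset (S → E) q) := by
    rw [ae_all_iff]; intro q
    have hc := measurableSet_cset (S → E) q
    have hm := meas_eval hp.meas hc
    have hi := p_int hp P hc
    have b1 := p_integral hγ hVm hV hp hP hi
    have b4 := p_real hγ hVm hV hp hP hc
    have b2 : P[fun ω => (p ω).real (cset (S → E) q) | tailSigma S E] =ᵐ[P] _ :=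
      condExp_of_aestronglyMeasurable' tail_le'
      (AEStronglyMeasurable.congr stronglyMeasurable_condExp.aestronglyMeasurable b4.symm) hi
    filter_upwards [b1, b2] with ω b1 b2
    refine conv ω _ _ hm (fun σ => prob_le_one) (measure_ne_top _ _) ?_
    exact b1.symm.trans b2
  have a3 : ∀ᵐ ω ∂P, ∀ (q : ℚ),
      ∫⁻ σ, (p σ (cset (S → E) q)) ^ 2 ∂(p ω) = (p ω (cset (S → E) q)) ^ 2 := by
    rw [ae_all_iff]; intro q
    have hc := measurableSet_cset (S → E) q
    have hm := (meas_eval hp.meas hc).pow_const 2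
    have hi : Integrable (fun σ => ((p σ (cset (S → E) q)) ^ 2).toReal) P :=
      Integrable.of_bound hm.ennreal_toReal.aestronglyMeasurable 1 (ae_of_all _ fun ω => by
        rw [Real.norm_of_nonneg ENNReal.toReal_nonneg, ENNReal.toReal_pow]
        exact pow_le_one₀ measureReal_nonneg measureReal_le_one)
    have b1 := p_integral hγ hVm hV hp hP hi
    have b4 := p_real hγ hVm hV hp hP hc
    have b5 : (fun ω => ((P[(cset (S → E) q).indicator (fun _ => (1:ℝ)) | tailSigma S E]) ω) ^ 2)
        =ᵐ[P] (fun σ => ((p σ (cset (S → E) q)) ^ 2).toReal) := by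
      filter_upwards [b4] with ω b4
      rw [← b4, ENNReal.toReal_pow]; rfl
    have b2 : P[fun σ => ((p σ (cset (S → E) q)) ^ 2).toReal | tailSigma S E] =ᵐ[P] _ :=
      condExp_of_aestronglyMeasurable' tail_le'
      (AEStronglyMeasurable.congr
        (stronglyMeasurable_condExp.pow 2).aestronglyMeasurable b5) hi
    filter_upwards [b1, b2] with ω b1 b2
    refine conv ω _ _ hm (fun σ => pow_le_one₀ zero_le prob_le_one)
      (ENNReal.pow_ne_top (measure_ne_top _ _)) ?_
    exact b1.symm.trans b2
  filter_upwards [a1, a2, a3] with ω a1 a2 a3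
  exact ⟨measure_univ, a1, a2, a3⟩

end Spec

section Cov
open ProbabilityTheory
variable {d : ℕ} [MeasurableSpace E]

lemma shift_shift (i j : Fin d → ℤ) (ω : (Fin d → ℤ) → E) : shift i (shift j ω) = shift (i + j) ω := by
  ext k; simp only [shift]; congr 1; abel

lemma shift_zero' (ω : (Fin d → ℤ) → E) : shift 0 ω = ω := by
  ext k; simp [shift]

lemma shift_left (j : Fin d → ℤ) : Function.LeftInverse (shift (E := E) (-j)) (shift j) := fun ω => by
  rw [shift_shift, neg_add_cancel, shift_zero']

lemma shift_right (j : Fin d → ℤ) : Function.RightInverse (shift (E := E) (-j)) (shift j) := fun ω => by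
  rw [shift_shift, add_neg_cancel, shift_zero']

lemma shift_meas (j : Fin d → ℤ) : Measurable (shift (E := E) j) :=
  measurable_pi_lambda _ fun _ => measurable_pi_apply _

lemma shift_image (j : Fin d → ℤ) (A : Set ((Fin d → ℤ) → E)) :
    shift j '' A = shift (-j) ⁻¹' A :=
  congrFun (Set.image_eq_preimage_of_inverse (shift_left j) (shift_right j)) _

lemma shiftMeasure_meas (j : Fin d → ℤ) : Measurable (shiftMeasure (E := E) j) :=
  Measure.measurable_map _ (shift_meas j)

lemma shiftMeasure_left (j : Fin d → ℤ) :
    Function.LeftInverse (shiftMeasure (E := E) (-j)) (shiftMeasure j) := fun ν => by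
  rw [shiftMeasure, shiftMeasure, Measure.map_map (shift_meas _) (shift_meas _),
    (shift_left j).comp_eq_id, Measure.map_id]

lemma shiftMeasure_right (j : Fin d → ℤ) :
    Function.RightInverse (shiftMeasure (E := E) (-j)) (shiftMeasure j) := fun ν => by
  rw [shiftMeasure, shiftMeasure, Measure.map_map (shift_meas _) (shift_meas _),
    (shift_right j).comp_eq_id, Measure.map_id]

lemma shiftMeasure_image (j : Fin d → ℤ) (M : Set (Measure ((Fin d → ℤ) → E))) :
    shiftMeasure j '' M = shiftMeasure (-j) ⁻¹' M :=
  congrFun (Set.image_eq_preimage_of_inverse (shiftMeasure_left j) (shiftMeasure_right j)) _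

lemma shiftFinset_neg (j : Fin d → ℤ) (Λ : Finset (Fin d → ℤ)) :
    shiftFinset j (shiftFinset (-j) Λ) = Λ := by
  rw [shiftFinset, shiftFinset, Finset.image_image]
  have h : ((fun i => i + j) ∘ fun i => i + -j) = (id : (Fin d → ℤ) → (Fin d → ℤ)) := by
    funext i
    simp
  rw [h, Finset.image_id]

variable [StandardBorelSpace E]
  {γ γ' : Finset (Fin d → ℤ) → ((Fin d → ℤ) → E) → Measure ((Fin d → ℤ) → E)}
  {V : ℕ → Finset (Fin d → ℤ)} {p p' : ((Fin d → ℤ) → E) → Measure ((Fin d → ℤ) → E)}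

lemma cov_apply {j : Fin d → ℤ}
    (hcov : ∀ Λ A, MeasurableSet A → ∀ ω,
      γ' (shiftFinset j Λ) (shift j ω) (shift j '' A) = γ Λ ω A)
    (Λ : Finset (Fin d → ℤ)) {A : Set ((Fin d → ℤ) → E)} (hA : MeasurableSet A)
    (ω : (Fin d → ℤ) → E) :
    γ' Λ (shift j ω) A = γ (shiftFinset (-j) Λ) ω (shift j ⁻¹' A) := by
  rw [← hcov _ _ (shift_meas j hA), shiftFinset_neg,
    Set.image_preimage_eq _ (shift_right j).surjective]

lemma cov_gibbs (hγ' : IsSpecification γ') {j : Fin d → ℤ}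
    (hcov : ∀ Λ A, MeasurableSet A → ∀ ω,
      γ' (shiftFinset j Λ) (shift j ω) (shift j '' A) = γ Λ ω A)
    {P : Measure ((Fin d → ℤ) → E)} (hP : P ∈ Gibbs γ) : P.map (shift j) ∈ Gibbs γ' := by
  have := hP.1
  refine ⟨Measure.isProbabilityMeasure_map (shift_meas j).aemeasurable, fun Λ A hA => ?_⟩
  rw [lintegral_map (meas_eval (spec_meas hγ' Λ) hA) (shift_meas j),
    Measure.map_apply (shift_meas j) hA]
  simp_rw [cov_apply hcov Λ hA]
  exact hP.2 _ _ (shift_meas j hA)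

lemma cov_w (hγ : IsSpecification γ) (hγ' : IsSpecification γ') (hVm : Monotone V)
    (hV : ∀ Λ, ∃ n, Λ ⊆ V n) (hp : IsLim γ V p) (hp' : IsLim γ' V p') {j : Fin d → ℤ}
    (hcov : ∀ Λ A, MeasurableSet A → ∀ ω,
      γ' (shiftFinset j Λ) (shift j ω) (shift j '' A) = γ Λ ω A)
    {P : Measure ((Fin d → ℤ) → E)} (hP : P ∈ Gibbs γ) :
    (P.map (shift j)).map p' = (P.map p).map (shiftMeasure j) := by
  have := hP.1
  have hpp := hp.prob
  have hpp' := hp'.prob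
  have hP' := cov_gibbs hγ' hcov hP
  have hWm : Monotone fun n => shiftFinset (-j) (V n) := fun a b hab =>
    Finset.image_subset_image (hVm hab)
  have hW : ∀ Λ, ∃ n, Λ ⊆ shiftFinset (-j) (V n) := by
    intro Λ
    obtain ⟨n, hn⟩ := hV (shiftFinset j Λ)
    refine ⟨n, ?_⟩
    have h := Finset.image_subset_image (f := fun i => i + -j) hn
    have h2 := shiftFinset_neg (-j) Λ
    rw [neg_neg] at h2
    change shiftFinset (-j) (shiftFinset j Λ) ⊆ shiftFinset (-j) (V n) at h
    rwa [h2] at h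
  have key : ∀ᵐ ω ∂P, p' (shift j ω) = shiftMeasure j (p ω) := by
    have h : ∀ᵐ ω ∂P, ∀ q : ℚ, p' (shift j ω) (cset _ q) = shiftMeasure j (p ω) (cset _ q) := by
      rw [ae_all_iff]; intro q
      have hc := measurableSet_cset ((Fin d → ℤ) → E) q
      have hc' := shift_meas (E := E) j hc
      have a1 := ae_of_ae_map (shift_meas j).aemeasurable (gamma_tendsto hγ' hP' hVm hV hc)
      have a2 := ae_of_ae_map (shift_meas j).aemeasurable (p_real hγ' hVm hV hp' hP' hc)
      have a3 := gamma_tendsto hγ hP hWm hW hc'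
      have a4 := p_real hγ hVm hV hp hP hc'
      filter_upwards [a1, a2, a3, a4] with ω a1 a2 a3 a4
      have e : (p' (shift j ω)).real (cset _ q) = (p ω).real (shift j ⁻¹' (cset _ q)) := by
        rw [a2, a4]
        refine tendsto_nhds_unique a1 (a3.congr fun n => ?_)
        rw [measureReal_def, measureReal_def, cov_apply hcov _ hc]
      rw [shiftMeasure, Measure.map_apply (shift_meas j) hc,
        ← ofReal_measureReal (μ := p ω), ← e, ofReal_measureReal]
    filter_upwards [h] with ω hω
    have : IsProbabilityMeasure (shiftMeasure j (p ω)) :=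
      Measure.isProbabilityMeasure_map (shift_meas j).aemeasurable
    exact cset_ext hω
  rw [Measure.map_map hp'.meas (shift_meas j), Measure.map_map (shiftMeasure_meas j) hp.meas]
  exact Measure.map_congr key

end Cov

/-- **Theorem 2 (translation-covariant extremal decomposition).** For a translation-covariant
random specification on `Ω = E^{ℤᵈ}` and a translation-covariant measurable random Gibbs
measure `ξ ↦ μ[ξ]`, the extremal decomposition map `ξ ↦ w[ξ]` of Theorem 1 can be chosen
translation invariant: `w[θ_jξ](θ_jM) = w[ξ](M)` for a.e. `ξ`. -/
theorem covariant_extremal_decomposition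
    {d : ℕ} [MeasurableSpace E] [StandardBorelSpace E] [MeasurableSpace H]
    (ℙ : Measure H) [IsProbabilityMeasure ℙ]
    (Θ : (Fin d → ℤ) → H → H)
    (hΘmeas : ∀ j, Measurable (Θ j))
    (hΘbij : ∀ j, Function.Bijective (Θ j))
    (γ : H → Finset (Fin d → ℤ) → ((Fin d → ℤ) → E) → Measure ((Fin d → ℤ) → E))
    (hγ : IsRandomSpecification γ)
    -- translation covariance of the random specification:
    -- `γ_{θ_jΛ}[θ_jξ](θ_jA | θ_jω) = γ_Λ[ξ](A | ω)`
    (hγcov : ∀ (j : Fin d → ℤ) (Λ : Finset (Fin d → ℤ)), ∀ᵐ ξ ∂ℙ,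
      ∀ A : Set ((Fin d → ℤ) → E), MeasurableSet A → ∀ ω,
        γ (Θ j ξ) (shiftFinset j Λ) (shift j ω) (shift j '' A) = γ ξ Λ ω A)
    (hGnonempty : ∀ᵐ ξ ∂ℙ, (Gibbs (γ ξ)).Nonempty)
    (μ : H → Measure ((Fin d → ℤ) → E))
    (hμmeas : Measurable μ)
    (hμprob : ∀ ξ, IsProbabilityMeasure (μ ξ))
    (hμGibbs : ∀ᵐ ξ ∂ℙ, μ ξ ∈ Gibbs (γ ξ))
    -- translation covariance of the random Gibbs measure: `μ[θ_jξ](A) = μ[ξ](θ_{-j}A)`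
    (hμcov : ∀ j : Fin d → ℤ, ∀ᵐ ξ ∂ℙ,
      ∀ A : Set ((Fin d → ℤ) → E), MeasurableSet A → μ (Θ j ξ) A = μ ξ (shift (-j) '' A)) :
    ∃ w : H → Measure (Measure ((Fin d → ℤ) → E)),
      -- the conclusions of the extremal decomposition theorem:
      Measurable w ∧
      (∀ ξ, IsProbabilityMeasure (w ξ)) ∧
      (∀ᵐ ξ ∂ℙ, ∃ N : Set (Measure ((Fin d → ℤ) → E)), MeasurableSet N ∧ w ξ N = 0 ∧
        (exGibbs (γ ξ))ᶜ ⊆ N) ∧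
      (∀ᵐ ξ ∂ℙ, ∀ A : Set ((Fin d → ℤ) → E), MeasurableSet A →
        μ ξ A = ∫⁻ ν, ν A ∂(w ξ)) ∧
      -- translation invariance: `w[θ_jξ](θ_jM) = w[ξ](M)`
      (∀ j : Fin d → ℤ, ∀ M : Set (Measure ((Fin d → ℤ) → E)), MeasurableSet M →
        ∀ᵐ ξ ∂ℙ, w (Θ j ξ) (shiftMeasure j '' M) = w ξ M) := by
  have hPne : Nonempty H := nonempty_of_isProbabilityMeasure ℙ
  have hΩne : Nonempty ((Fin d → ℤ) → E) := by
    have := hμprob hPne.some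
    exact nonempty_of_isProbabilityMeasure (μ hPne.some)
  obtain ⟨V, hVm, hVt⟩ := exists_seq_monotone_tendsto_atTop_atTop (Finset (Fin d → ℤ))
  have hV : ∀ Λ, ∃ n, Λ ⊆ V n := fun Λ => (hVt.eventually_ge_atTop Λ).exists
  obtain ⟨pi, hpim, hpip, hpil⟩ := exists_limit
    (fun n (x : H × ((Fin d → ℤ) → E)) => γ x.1 (V n) x.2)
    (fun n A hA => hγ.jointMeas (V n) A hA)
  have hlim : ∀ ξ, IsLim (γ ξ) V (fun ω => pi (ξ, ω)) := fun ξ =>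
    ⟨hpim.comp measurable_prodMk_left, fun ω => hpip _, fun ω ν hν h => hpil (ξ, ω) ν hν h⟩
  let κ : ProbabilityTheory.Kernel H ((Fin d → ℤ) → E) := ⟨μ, hμmeas⟩
  have hκ : ProbabilityTheory.IsMarkovKernel κ := ⟨hμprob⟩
  refine ⟨fun ξ => (μ ξ).map fun ω => pi (ξ, ω), ?_, ?_, ?_, ?_, ?_⟩
  · refine Measure.measurable_of_measurable_coe _ fun M hM => ?_
    have : (fun ξ => ((μ ξ).map fun ω => pi (ξ, ω)) M)
        = fun ξ => κ ξ (Prod.mk ξ ⁻¹' (pi ⁻¹' M)) := by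
      ext ξ
      rw [Measure.map_apply (hlim ξ).meas hM]
      rfl
    rw [this]
    exact ProbabilityTheory.Kernel.measurable_kernel_prodMk_left (hpim hM)
  · intro ξ
    have := hμprob ξ
    exact Measure.isProbabilityMeasure_map (hlim ξ).meas.aemeasurable
  · filter_upwards [hμGibbs] with ξ hξ
    have hgm := good_meas (hγ.spec ξ) (hlim ξ)
    refine ⟨(Good (γ ξ) (fun ω => pi (ξ, ω)))ᶜ, hgm.compl, ?_,
      Set.compl_subset_compl.2 (good_ex (hγ.spec ξ) hVm hV (hlim ξ))⟩
    rw [Measure.map_apply (hlim ξ).meas hgm.compl]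
    exact ae_iff.1 (ae_good (hγ.spec ξ) hVm hV (hlim ξ) hξ)
  · filter_upwards [hμGibbs] with ξ hξ A hA
    rw [lintegral_map (Measure.measurable_coe hA) (hlim ξ).meas]
    exact (p_decomp (hγ.spec ξ) hVm hV (hlim ξ) hξ hA).symm
  · intro j M hM
    filter_upwards [hμGibbs, hμcov j, ae_all_iff.2 (hγcov j)] with ξ hξ h1 h2
    have hmap : μ (Θ j ξ) = (μ ξ).map (shift j) := by
      ext A hA
      rw [h1 A hA, shift_image, neg_neg, Measure.map_apply (shift_meas j) hA]
    have h3 := cov_w (hγ.spec ξ) (hγ.spec (Θ j ξ)) hVm hV (hlim ξ) (hlim (Θ j ξ)) h2 hξ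
    rw [hmap, h3, shiftMeasure_image, Measure.map_apply (shiftMeasure_meas j)
      (shiftMeasure_meas (-j) hM), ← Set.preimage_comp, (shiftMeasure_left j).comp_eq_id,
      Set.preimage_id]

end GibbsMeta
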